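/- arXiv:2507.12303 — 2 statements merged into one kernel-verified Lean document; each statement's English description precedes it below -/
import Mathlib

section
/- Let p>2 and U⊆V be finite and nonempty. Suppose there is δ>0 with σ(x,t) ≥ δ for all x∈U and t ≥ 0, that u0 ≥ 0 on U and u0 is not identically zero on U, and that for some fixed ε>0, f(s) ≥ (1/δ + ε)·s^{p−1} for all s ≥ 0. Then the (unique) nonnegative solution u of the Dirichlet problem u_t = Δ_p|_U u + σ(x,t)f(u) in U×(0,T), u=0 on ∂U×[0,T), u(·,0)=u0 on U, blows up in finite time: its maximal existence time T is finite and max_{x∈U} u(x,t) → ∞ as t → T⁻. -/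
open scoped ENNReal
open Classical Filter Set

/-- The weighted degree `μ(x) = ∑_{y ∼ x} ω(x,y)` of a vertex of a locally finite
weighted graph (non-neighbours contribute `ω(x,y) = 0`). -/
noncomputable def graphMu {V : Type*} (ω : V → V → ℝ) (x : V) : ℝ := ∑' y, ω x y

/-- The graph `p`-Laplacian
`Δ_p f(x) = (1/μ(x)) ∑_{y ∼ x} ω(x,y) |f(y) - f(x)|^{p-2} (f(y) - f(x))`. -/
noncomputable def pLap {V : Type*} (ω : V → V → ℝ) (p : ℝ) (f : V → ℝ) (x : V) : ℝ :=
  (graphMu ω x)⁻¹ * ∑' y, ω x y * |f y - f x| ^ (p - 2) * (f y - f x)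

/-- The (outer vertex) boundary of `U`: vertices outside `U` adjacent to some vertex of `U`. -/
def bdry {V : Type*} (ω : V → V → ℝ) (U : Set V) : Set V :=
  {x | x ∉ U ∧ ∃ y ∈ U, 0 < ω x y}

/-- `Ū = U ∪ ∂U`. -/
def vclosure {V : Type*} (ω : V → V → ℝ) (U : Set V) : Set V := U ∪ bdry ω U

/-- The time interval `[0,T)` for an extended-real time horizon `T ∈ (0,∞]`. -/
def ITv (T : ℝ≥0∞) : Set ℝ := {t : ℝ | 0 ≤ t ∧ ENNReal.ofReal t < T}

/-- A nonnegative solution on `Ū × [0,T)` of the Dirichlet problem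
`u_t = Δ_p|_U u + σ(x,t) f(u)` in `U × (0,T)`, `u = 0` on `∂U × [0,T)`, `u(·,0) = u0` on `U`.
(For `x ∈ U` all neighbours of `x` lie in `Ū`, so `Δ_p` coincides with `Δ_p|_U` there.) -/
def IsNonnegDirichletSol {V : Type*} (ω : V → V → ℝ) (p : ℝ) (σ : V → ℝ → ℝ) (f : ℝ → ℝ)
    (u0 : V → ℝ) (U : Set V) (T : ℝ≥0∞) (u : V → ℝ → ℝ) : Prop :=
  (∀ x ∈ U, ContDiffOn ℝ 1 (u x) (ITv T)) ∧
  (∀ x ∈ vclosure ω U, ∀ t ∈ ITv T, 0 ≤ u x t) ∧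
  (∀ x ∈ U, ∀ t ∈ ITv T, 0 < t →
    derivWithin (u x) (ITv T) t = pLap ω p (fun y => u y t) x + σ x t * f (u x t)) ∧
  (∀ x ∈ bdry ω U, ∀ t ∈ ITv T, u x t = 0) ∧
  (∀ x ∈ U, u x 0 = u0 x)


/-- `|s|^{p-2} s` is locally Lipschitz. -/
lemma phi_locLip (p : ℝ) (hp : 2 < p) : LocallyLipschitz (fun s : ℝ => |s| ^ (p - 2) * s) := by
  have h1 : LocallyLipschitz (fun s : ℝ => ‖s‖ ^ (p - 1)) :=
    (contDiff_norm_rpow (E := ℝ) (p := p - 1) (by linarith)).locallyLipschitz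
  have h2 : LocallyLipschitz (fun s : ℝ => max s 0) := LocallyLipschitz.id.max_const 0
  have h3 : LocallyLipschitz (fun s : ℝ => max (-s) 0) := (LocallyLipschitz.id.neg).max_const 0
  have h := (h1.comp h2).sub (h1.comp h3)
  suffices e : (fun s : ℝ => |s| ^ (p - 2) * s) = fun s => ((fun s : ℝ => ‖s‖ ^ (p - 1)) ∘
      fun s : ℝ => max s 0) s - ((fun s : ℝ => ‖s‖ ^ (p - 1)) ∘ fun s : ℝ => max (-s) 0) s by
    rw [e]; exact h
  funext s
  simp only [Function.comp, Real.norm_eq_abs]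
  rcases lt_trichotomy s 0 with hs | hs | hs
  · rw [max_eq_right hs.le, max_eq_left (by linarith), abs_neg, abs_zero,
      Real.zero_rpow (by linarith), abs_of_neg hs, show p - 1 = (p - 2) + 1 by ring,
      Real.rpow_add_one (by linarith)]
    ring
  · subst hs; simp
  · rw [max_eq_left hs.le, max_eq_right (by linarith), abs_zero,
      Real.zero_rpow (by linarith), abs_of_pos hs, show p - 1 = (p - 2) + 1 by ring,
      Real.rpow_add_one (by linarith)]
    ring

lemma locLip_mul {α : Type*} [PseudoEMetricSpace α] {f g : α → ℝ} (hf : LocallyLipschitz f)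
    (hg : LocallyLipschitz g) : LocallyLipschitz (fun a => f a * g a) := by
  have h : LocallyLipschitz (fun q : ℝ × ℝ => q.1 * q.2) :=
    (contDiff_fst.mul contDiff_snd : ContDiff ℝ 1 (fun q : ℝ × ℝ => q.1 * q.2)).locallyLipschitz
  exact h.comp (hf.prodMk hg)

lemma locLip_sum {α β : Type*} [PseudoEMetricSpace α] (s : Finset β) {f : β → α → ℝ}
    (hf : ∀ b ∈ s, LocallyLipschitz (f b)) : LocallyLipschitz (fun a => ∑ b ∈ s, f b a) := by
  classical
  induction s using Finset.induction_on with
  | empty => simpa using LocallyLipschitz.const (0 : ℝ)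
  | insert b s hb ih =>
    simp only [Finset.sum_insert hb]
    exact (hf b (by simp)).add (ih fun c hc => hf c (by simp [hc]))

lemma locLip_pi {α ι : Type*} [PseudoEMetricSpace α] [Fintype ι] {f : α → ι → ℝ}
    (hf : ∀ i, LocallyLipschitz (fun a => f a i)) : LocallyLipschitz f := by
  intro a
  choose K s hs hL using fun i => hf i a
  refine ⟨∑ i, K i, ⋂ i, s i, Filter.iInter_mem.2 hs, ?_⟩
  intro x hx y hy
  refine (edist_pi_le_iff).2 fun i => ?_
  refine (hL i (mem_iInter.1 hx i) (mem_iInter.1 hy i)).trans ?_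
  gcongr
  exact Finset.single_le_sum (f := K) (fun _ _ => zero_le) (Finset.mem_univ i)

lemma ITv_eq_of (b : ℝ) : ITv (ENNReal.ofReal b) = Ico 0 b := by
  ext t
  simp only [ITv, mem_ofPred_eq, mem_Ico]
  constructor
  · rintro ⟨h, h'⟩
    exact ⟨h, (ENNReal.ofReal_lt_ofReal_iff_of_nonneg h).1 h'⟩
  · rintro ⟨h, h'⟩
    exact ⟨h, (ENNReal.ofReal_lt_ofReal_iff_of_nonneg h).2 h'⟩

/-- A continuous function on `I` whose derivative is known off one point. -/
lemma deriv_extend {I : Set ℝ} (hI0 : I ⊆ Ici 0) (hI : ∀ t ∈ I, ∃ b, t < b ∧ Ico 0 b ⊆ I)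
    {v G : ℝ → ℝ} (τ : ℝ) (hv : ContinuousOn v I) (hG : ContinuousOn G I)
    (hd : ∀ t ∈ I, 0 < t → t ≠ τ → HasDerivAt v (G t) t) :
    ∀ t ∈ I, HasDerivWithinAt v (G t) I t := by
  intro t ht
  obtain ⟨b, htb, hb⟩ := hI t ht
  have h0 : 0 ≤ t := hI0 ht
  have key : ∀ s ∈ Ico 0 b, s ≠ t → s ≠ τ → 0 < s → HasDerivAt v (G s) s :=
    fun s hs _ h2 h3 => hd s (hb hs) h3 h2
  -- right derivative
  have hR : HasDerivWithinAt v (G t) (Ici t) t := by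
    obtain ⟨c, htc, hcb, hcτ⟩ : ∃ c, t < c ∧ c ≤ b ∧ ∀ s ∈ Ioo t c, s ≠ τ := by
      rcases lt_or_ge t τ with h | h
      · exact ⟨min b τ, lt_min htb h, min_le_left _ _,
          fun s hs => (lt_of_lt_of_le hs.2 (min_le_right _ _)).ne⟩
      · exact ⟨b, htb, le_rfl, fun s hs => (lt_of_le_of_lt h hs.1).ne'⟩
    have hsub : Ioo t c ⊆ I := fun s hs => hb ⟨h0.trans hs.1.le, hs.2.trans_le hcb⟩
    have hds : ∀ s ∈ Ioo t c, HasDerivAt v (G s) s := fun s hs =>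
      hd s (hsub hs) (h0.trans_lt hs.1) (hcτ s hs)
    refine hasDerivWithinAt_Ici_of_tendsto_deriv (s := Ioo t c)
      (fun s hs => (hds s hs).differentiableAt.differentiableWithinAt)
      ((hv t ht).mono hsub) (Ioo_mem_nhdsGT htc) ?_
    have : Tendsto G (nhdsWithin t (Ioi t)) (nhds (G t)) := by
      rw [← nhdsWithin_Ioo_eq_nhdsGT htc]
      exact ((hG t ht).mono hsub)
    refine this.congr' ?_
    filter_upwards [Ioo_mem_nhdsGT htc] with s hs using (hds s hs).deriv.symm
  rcases h0.eq_or_lt with h00 | h00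
  · exact hR.mono (by rw [← h00]; exact hI0)
  have hL : HasDerivWithinAt v (G t) (Iic t) t := by
    obtain ⟨c, htc, hcb, hcτ⟩ : ∃ c, c < t ∧ 0 ≤ c ∧ ∀ s ∈ Ioo c t, s ≠ τ := by
      rcases lt_or_ge τ t with h | h
      · exact ⟨max 0 τ, max_lt h00 h, le_max_left _ _,
          fun s hs => (lt_of_le_of_lt (le_max_right _ _) hs.1).ne'⟩
      · exact ⟨0, h00, le_rfl, fun s hs => (lt_of_lt_of_le hs.2 h).ne⟩
    have hsub : Ioo c t ⊆ I := fun s hs => hb ⟨hcb.trans hs.1.le, hs.2.trans htb⟩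
    have hds : ∀ s ∈ Ioo c t, HasDerivAt v (G s) s := fun s hs =>
      hd s (hsub hs) (hcb.trans_lt hs.1) (hcτ s hs)
    refine hasDerivWithinAt_Iic_of_tendsto_deriv (s := Ioo c t)
      (fun s hs => (hds s hs).differentiableAt.differentiableWithinAt)
      ((hv t ht).mono hsub) (Ioo_mem_nhdsLT htc) ?_
    have : Tendsto G (nhdsWithin t (Iio t)) (nhds (G t)) := by
      rw [← nhdsWithin_Ioo_eq_nhdsLT htc]
      exact ((hG t ht).mono hsub)
    refine this.congr' ?_
    filter_upwards [Ioo_mem_nhdsLT htc] with s hs using (hds s hs).deriv.symm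
  have := hL.union hR
  rw [Iic_union_Ici] at this
  exact this.mono (subset_univ _)

/-- If `v ≥ 0` at the start and `v' ≥ 0` wherever `v < 0`, then `v ≥ 0`. -/
lemma nonneg_of_deriv {b : ℝ} {v G : ℝ → ℝ} {τ : ℝ} (hv : ContinuousOn v (Icc τ b))
    (h0 : 0 ≤ v τ) (hd : ∀ t ∈ Ioo τ b, HasDerivAt v (G t) t)
    (hG : ∀ t ∈ Ioo τ b, v t < 0 → 0 ≤ G t) : ∀ t ∈ Icc τ b, 0 ≤ v t := by
  intro t ht
  by_contra! hneg
  -- last time before t with v ≥ 0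
  have hcl : IsClosed {s ∈ Icc τ t | 0 ≤ v s} := by
    have := (hv.mono (Icc_subset_Icc_right ht.2)).preimage_isClosed_of_isClosed isClosed_Icc
      (isClosed_Ici (a := (0 : ℝ)))
    simpa [Set.inter_def] using this
  have hcomp : IsCompact {s ∈ Icc τ t | 0 ≤ v s} :=
    isCompact_Icc.of_isClosed_subset hcl (fun s hs => hs.1)
  obtain ⟨s, hs⟩ := hcomp.exists_isGreatest ⟨τ, ⟨le_rfl, ht.1⟩, h0⟩
  have hst : s < t := lt_of_le_of_ne hs.1.1.2 (by rintro rfl; exact absurd hs.1.2 (not_le.2 hneg))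
  have hlt : ∀ r ∈ Ioo s t, v r < 0 := by
    intro r hr
    by_contra! hr0
    exact absurd (hs.2 ⟨⟨hs.1.1.1.trans hr.1.le, hr.2.le⟩, hr0⟩) (not_le.2 hr.1)
  have hmono : MonotoneOn v (Icc s t) := by
    have hin : ∀ r ∈ Ioo s t, r ∈ Ioo τ b := fun r hr =>
      ⟨hs.1.1.1.trans_lt hr.1, hr.2.trans_le ht.2⟩
    refine monotoneOn_of_deriv_nonneg (convex_Icc _ _)
      (hv.mono (Icc_subset_Icc hs.1.1.1 ht.2)) ?_ ?_
    · rw [interior_Icc]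
      exact fun r hr => (hd r (hin r hr)).differentiableAt.differentiableWithinAt
    · rw [interior_Icc]
      intro r hr
      rw [(hd r (hin r hr)).deriv]
      exact hG r (hin r hr) (hlt r hr)
  have := hmono ⟨le_rfl, hst.le⟩ ⟨hst.le, le_rfl⟩ hst.le
  linarith [hs.1.2]

/-- Continuation of a bounded solution of an ODE past a finite time. -/
lemma ode_continuation {ι : Type*} [Fintype ι] {H : (ι → ℝ) × (ι → ℝ) → (ι → ℝ)}
    (hH : LocallyLipschitz H) {s : ℝ → (ι → ℝ)} (hs : Continuous s) {T : ℝ} (hT : 0 < T)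
    {u : ℝ → (ι → ℝ)} {M : ℝ} (hM : ∀ t ∈ Ico 0 T, ‖u t‖ ≤ M)
    (hu : ∀ t ∈ Ico 0 T, HasDerivWithinAt u (H (u t, s t)) (Ico 0 T) t) :
    ∃ η > 0, ∃ v : ℝ → (ι → ℝ), (∀ t ∈ Ico 0 T, v t = u t) ∧ ContinuousOn v (Ico 0 (T + η)) ∧
      ∀ t ∈ Ioo 0 (T + η), t ≠ T → HasDerivAt v (H (v t, s t)) t := by
  -- bounded derivative
  have hcomp : IsCompact (H '' (Metric.closedBall 0 M ×ˢ (s '' Icc 0 T))) :=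
    ((isCompact_closedBall _ _).prod (isCompact_Icc.image hs)).image hH.continuous
  obtain ⟨C, hC⟩ := hcomp.isBounded.exists_norm_le
  have hL : LipschitzOnWith (Real.toNNReal C) u (Ico 0 T) := by
    refine Convex.lipschitzOnWith_of_nnnorm_hasDerivWithin_le (convex_Ico _ _) hu ?_
    intro t ht
    rw [← NNReal.coe_le_coe, coe_nnnorm]
    refine (hC _ ⟨(u t, s t), ⟨?_, ?_⟩, rfl⟩).trans (Real.le_coe_toNNReal C)
    · simpa using hM t ht
    · exact ⟨t, ⟨ht.1, ht.2.le⟩, rfl⟩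
  obtain ⟨g, hg, hug⟩ := hL.extend_pi
  obtain ⟨K, S, hS, hKS⟩ := hH (g T, s T)
  rw [nhds_prod_eq, Filter.mem_prod_iff] at hS
  obtain ⟨A, hA, B, hB, hAB⟩ := hS
  obtain ⟨a, ha, haA⟩ := Metric.nhds_basis_closedBall.mem_iff.1 hA
  have hB' : s ⁻¹' B ∈ nhds T := hs.continuousAt hB
  obtain ⟨d, hd, hdB⟩ := Metric.nhds_basis_closedBall.mem_iff.1 hB'
  have hcomp2 : IsCompact (H '' (Metric.closedBall (g T) a ×ˢ (s '' Icc T (T + d)))) :=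
    ((isCompact_closedBall _ _).prod (isCompact_Icc.image hs)).image hH.continuous
  obtain ⟨L, hL0, hL2⟩ := hcomp2.isBounded.exists_pos_norm_le
  set η := min d (a / L) with hη
  have hηpos : 0 < η := lt_min hd (div_pos ha hL0)
  have hPL : IsPicardLindelof (fun t v => H (v, s t)) (tmin := T) (tmax := T + η)
      ⟨T, le_rfl, by linarith⟩ (g T) ⟨a, ha.le⟩ 0 ⟨L, hL0.le⟩ K := by
    refine ⟨?_, ?_, ?_, ?_⟩
    · intro t ht x hx y hy
      have htB : s t ∈ B := hdB (by
        rw [Metric.mem_closedBall, Real.dist_eq, abs_of_nonneg (by linarith [ht.1])]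
        linarith [ht.2, min_le_left d (a / L)])
      have hx' : x ∈ Metric.closedBall (g T) a := hx
      have hy' : y ∈ Metric.closedBall (g T) a := hy
      have hxS : (x, s t) ∈ S := hAB ⟨haA hx', htB⟩
      have hyS : (y, s t) ∈ S := hAB ⟨haA hy', htB⟩
      have := hKS hxS hyS
      refine this.trans ?_
      gcongr
      simp [Prod.edist_eq]
    · intro x hx
      exact (hH.continuous.comp (continuous_const.prodMk hs)).continuousOn
    · intro t ht x hx
      exact hL2 _ ⟨(x, s t), ⟨hx, t, ⟨ht.1, by linarith [ht.2, min_le_left d (a / L)]⟩, rfl⟩, rfl⟩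
    · simp only [NNReal.coe_zero, sub_self, sub_zero, add_sub_cancel_left]
      rw [max_eq_left hηpos.le]
      calc L * η ≤ L * (a / L) := by gcongr; exact min_le_right _ _
        _ = a := by field_simp
  obtain ⟨w, hwT, hw⟩ := hPL.exists_eq_forall_mem_Icc_hasDerivWithinAt₀
  simp only at hwT hw
  refine ⟨η, hηpos, fun t => if t ≤ T then g t else w t, ?_, ?_, ?_⟩
  · intro t ht
    simp only [ht.2.le, if_true]
    exact (hug ht).symm
  · have hwc : ContinuousOn w (Icc T (T + η)) := fun t ht => (hw t ht).continuousWithinAt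
    refine ContinuousOn.if ?_ hg.continuous.continuousOn ?_
    · intro t ht
      have : t = T := by simpa using frontier_le_subset_eq continuous_id continuous_const ht.2
      rw [this, hwT]
    · refine hwc.mono ?_
      rintro t ⟨ht1, ht2⟩
      have : t ∈ closure (Ioi T) := by simpa [Ioi] using ht2
      rw [closure_Ioi] at this
      exact ⟨this, ht1.2.le⟩
  · intro t ht hne
    rcases lt_or_gt_of_ne hne with h | h
    · have h1 : HasDerivAt u (H (u t, s t)) t :=
        (hu t ⟨ht.1.le, h⟩).hasDerivAt (Ico_mem_nhds ht.1 h)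
      simp only [h.le, if_true]
      rw [← hug ⟨ht.1.le, h⟩]
      refine h1.congr_of_eventuallyEq ?_
      filter_upwards [Ioo_mem_nhds ht.1 h] with r hr
      simp only [hr.2.le, if_true]
      exact (hug ⟨hr.1.le, hr.2⟩).symm
    · have h1 : HasDerivAt w (H (w t, s t)) t :=
        (hw t ⟨h.le, ht.2.le⟩).hasDerivAt (Icc_mem_nhds h ht.2)
      simp only [not_le.2 h, if_false]
      refine h1.congr_of_eventuallyEq ?_
      filter_upwards [Ioi_mem_nhds h] with r hr
      simp only [not_le.2 (mem_Ioi.1 hr), if_false]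

/-- Growth of a maximum: if at each maximizer the derivative is at least `c m^{p-1}`, then the
maximum is nondecreasing and `m^{2-p}` decays linearly. -/
lemma max_growth {ι : Type*} [Fintype ι] [Nonempty ι] {a b c p : ℝ} (hc : 0 < c)
    (hp : 2 < p) {u u' : ι → ℝ → ℝ}
    (hu : ∀ i, ContinuousOn (u i) (Icc a b))
    (hd : ∀ i, ∀ t ∈ Ico a b, HasDerivWithinAt (u i) (u' i t) (Ici t) t)
    (hg : ∀ i, ∀ t ∈ Ico a b, (∀ j, u j t ≤ u i t) → c * (u i t) ^ (p - 1) ≤ u' i t)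
    (h0 : 0 < ⨆ i, u i a) :
    ∀ t ∈ Icc a b, (⨆ i, u i a) ≤ (⨆ i, u i t) ∧
      (⨆ i, u i t) ^ (-(p - 2)) ≤ (⨆ i, u i a) ^ (-(p - 2)) - (p - 2) * c / 2 * (t - a) := by
  set m : ℝ → ℝ := fun t => ⨆ i, u i t with hm
  have hle : ∀ i t, u i t ≤ m t := fun i t => le_ciSup (finite_range (fun j => u j t)).bddAbove i
  have hex : ∀ t, ∃ i, u i t = m t := fun t => exists_eq_ciSup_of_finite (f := fun j => u j t)
  have hmc : ContinuousOn m (Icc a b) := by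
    have : m = fun t => Finset.univ.sup' Finset.univ_nonempty (fun i => u i t) := by
      funext t; rw [Finset.sup'_univ_eq_ciSup]
    rw [this]
    exact ContinuousOn.finset_sup'_apply _ fun i _ => hu i
  have h1 : ∀ t ∈ Icc a b, m a ≤ m t := by
    have := image_le_of_liminf_slope_right_lt_deriv_boundary' (f := fun t => - m t)
      (f' := fun t => - (c * m t ^ (p - 1))) (a := a) (b := b) hmc.neg ?_ (B := fun _ => - m a)
      (B' := fun _ => 0) le_rfl continuousOn_const
      (fun x _ => hasDerivWithinAt_const _ _ _) ?_
    · intro t ht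
      have := this ht
      linarith
    · intro t ht r hr
      obtain ⟨i, hi⟩ := hex t
      have hder := (hd i t ht).neg
      have hlt : - u' i t < r := by
        have := hg i t ht (fun j => hi ▸ hle j t)
        rw [hi] at this
        linarith
      have hsl := ((hasDerivWithinAt_iff_tendsto_slope' self_notMem_Ioi).1
      hder.Ioi_of_Ici).eventually_lt_const hlt
      refine Eventually.frequently ?_
      filter_upwards [hsl, self_mem_nhdsWithin] with z hz hzt
      refine lt_of_le_of_lt ?_ hz
      rw [slope_def_field, slope_def_field]
      have : 0 < z - t := sub_pos.2 hzt
      simp only [Pi.neg_apply]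
      rw [hi]
      gcongr
      exact hle i z
    · intro t ht hEq
      have hEq' : m t = m a := by linarith
      have : 0 < m t := hEq' ▸ h0
      have := Real.rpow_pos_of_pos this (p - 1)
      have := mul_pos hc this
      simpa using this
  have hpos : ∀ t ∈ Icc a b, 0 < m t := fun t ht => h0.trans_le (h1 t ht)
  have h2 := image_le_of_liminf_slope_right_lt_deriv_boundary' (f := fun t => m t ^ (-(p - 2)))
      (f' := fun t => - ((p - 2) * c)) (a := a) (b := b)
      (hmc.rpow_const fun t ht => Or.inl (hpos t ht).ne') ?_
      (B := fun t => m a ^ (-(p - 2)) - (p - 2) * c / 2 * (t - a))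
      (B' := fun _ => - ((p - 2) * c / 2)) (by simp) (by fun_prop)
      (fun x _ => ?_) ?_
  · exact fun t ht => ⟨h1 t ht, h2 ht⟩
  · intro t ht r hr
    have htI : t ∈ Icc a b := ⟨ht.1, ht.2.le⟩
    obtain ⟨i, hi⟩ := hex t
    have hpi : 0 < u i t := hi ▸ hpos t htI
    have hder := (hd i t ht).rpow_const (p := -(p - 2)) (Or.inl hpi.ne')
    have hlt : u' i t * -(p - 2) * u i t ^ (-(p - 2) - 1) < r := by
      have h3 := hg i t ht (fun j => hi ▸ hle j t)
      refine lt_of_le_of_lt ?_ hr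
      have h4 : u i t ^ (p - 1) * u i t ^ (-(p - 2) - 1) = 1 := by
        rw [← Real.rpow_add hpi]; ring_nf; exact Real.rpow_zero _
      have h5 : 0 < u i t ^ (-(p - 2) - 1) := Real.rpow_pos_of_pos hpi _
      have h6 := mul_le_mul_of_nonneg_right h3 h5.le
      rw [mul_assoc, h4] at h6
      nlinarith
    have hsl := ((hasDerivWithinAt_iff_tendsto_slope' self_notMem_Ioi).1
      hder.Ioi_of_Ici).eventually_lt_const hlt
    have hposz : ∀ᶠ z in nhdsWithin t (Ioi t), 0 < u i z :=
      (hd i t ht).Ioi_of_Ici.continuousWithinAt.eventually_const_lt hpi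
    refine Eventually.frequently ?_
    filter_upwards [hsl, self_mem_nhdsWithin, hposz] with z hz hzt hz0
    refine lt_of_le_of_lt ?_ hz
    rw [slope_def_field, slope_def_field]
    have : 0 < z - t := sub_pos.2 hzt
    rw [hi]
    gcongr ?_ / _
    gcongr ?_ - _
    exact Real.rpow_le_rpow_of_nonpos hz0 (hle i z) (by linarith)
  · have h := (((hasDerivAt_id x).sub_const a).const_mul ((p - 2) * c / 2)).const_sub
      (m a ^ (-(p - 2)))
    simpa using h.hasDerivWithinAt
  · intro t ht _
    have : 0 < (p - 2) * c := mul_pos (by linarith) hc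
    linarith

lemma pLap_eq_sum {V : Type*} {ω : V → V → ℝ} (hlf : ∀ x, (Function.support (ω x)).Finite)
    (p : ℝ) (g : V → ℝ) (x : V) : pLap ω p g x = (graphMu ω x)⁻¹ *
      ∑ y ∈ (hlf x).toFinset, ω x y * (|g y - g x| ^ (p - 2) * (g y - g x)) := by
  unfold pLap
  congr 1
  rw [tsum_eq_sum (s := (hlf x).toFinset)]
  · simp only [mul_assoc]
  · intro y hy
    have : ω x y = 0 := by simpa using hy
    simp [this]

lemma graphMu_eq_sum {V : Type*} {ω : V → V → ℝ} (hlf : ∀ x, (Function.support (ω x)).Finite)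
    (x : V) : graphMu ω x = ∑ y ∈ (hlf x).toFinset, ω x y := by
  unfold graphMu
  rw [tsum_eq_sum (s := (hlf x).toFinset)]
  intro y hy
  simpa using hy

lemma pLap_congr {V : Type*} {ω : V → V → ℝ} {p : ℝ} {g g' : V → ℝ} {x : V} (hx : g x = g' x)
    (h : ∀ y, ω x y ≠ 0 → g y = g' y) : pLap ω p g x = pLap ω p g' x := by
  unfold pLap
  congr 1
  refine tsum_congr fun y => ?_
  by_cases hy : ω x y = 0
  · simp [hy]
  · rw [hx, h y hy]

/-- Lower bound for the `p`-Laplacian at a maximum of a nonnegative function. -/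
lemma pLap_at_max {V : Type*} {ω : V → V → ℝ} (hnonneg : ∀ x y, 0 ≤ ω x y)
    (hlf : ∀ x, (Function.support (ω x)).Finite) {p : ℝ} (hp : 2 < p) {g : V → ℝ} {x : V}
    (h0 : ∀ y, 0 ≤ g y) (h1 : ∀ y, g y ≤ g x) : -(g x) ^ (p - 1) ≤ pLap ω p g x := by
  rw [pLap_eq_sum hlf]
  have hμ : 0 ≤ graphMu ω x := by
    rw [graphMu_eq_sum hlf]; exact Finset.sum_nonneg fun y _ => hnonneg x y
  have hpow : 0 ≤ (g x) ^ (p - 1) := Real.rpow_nonneg (h0 x) _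
  have hterm : ∀ y, -(g x) ^ (p - 1) ≤ |g y - g x| ^ (p - 2) * (g y - g x) := by
    intro y
    have e : g y - g x = - (g x - g y) := by ring
    have hn : 0 ≤ g x - g y := by linarith [h1 y]
    have h2 : (g x) ^ (p - 1) = (g x) ^ (p - 2) * g x := by
      rcases (h0 x).eq_or_lt with h | h
      · rw [← h, Real.zero_rpow (by linarith)]; simp
      · rw [show p - 1 = (p - 2) + 1 by ring, Real.rpow_add_one h.ne']
    rw [e, abs_neg, abs_of_nonneg hn, h2, mul_neg]
    have h3 : (g x - g y) ^ (p - 2) ≤ (g x) ^ (p - 2) :=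
      Real.rpow_le_rpow hn (by linarith [h0 y]) (by linarith)
    have h4 : (g x - g y) ^ (p - 2) * (g x - g y) ≤ (g x) ^ (p - 2) * g x :=
      mul_le_mul h3 (by linarith [h0 y]) hn (Real.rpow_nonneg (h0 x) _)
    linarith
  have hsum : graphMu ω x * (-(g x) ^ (p - 1)) ≤
      ∑ y ∈ (hlf x).toFinset, ω x y * (|g y - g x| ^ (p - 2) * (g y - g x)) := by
    rw [graphMu_eq_sum hlf, Finset.sum_mul]
    exact Finset.sum_le_sum fun y _ => mul_le_mul_of_nonneg_left (hterm y) (hnonneg x y)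
  rcases hμ.eq_or_lt with h | h
  · rw [← h]; simpa using hpow
  · calc -(g x) ^ (p - 1) = (graphMu ω x)⁻¹ * (graphMu ω x * (-(g x) ^ (p - 1))) := by
          field_simp
      _ ≤ _ := mul_le_mul_of_nonneg_left hsum (inv_nonneg.2 hμ)

/-- Extension by zero of the positive part of a function on `U`. -/
noncomputable def extU {V : Type*} (U : Set V) (v : U → ℝ) (y : V) : ℝ :=
  if h : y ∈ U then max (v ⟨y, h⟩) 0 else 0

lemma extU_nonneg {V : Type*} (U : Set V) (v : U → ℝ) (y : V) : 0 ≤ extU U v y := by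
  unfold extU; split_ifs
  · exact le_max_right _ _
  · exact le_rfl

lemma extU_coe {V : Type*} (U : Set V) (v : U → ℝ) (y : U) : extU U v y = max (v y) 0 := by
  simp [extU]

/-- The vector field of the Dirichlet problem. -/
noncomputable def vfield {V : Type*} (ω : V → V → ℝ) (p : ℝ) (f : ℝ → ℝ) (U : Set V)
    (q : (U → ℝ) × (U → ℝ)) (x : U) : ℝ :=
  pLap ω p (extU U q.1) x + q.2 x * f (max (q.1 x) 0)

lemma locLip_eval {ι : Type*} [Fintype ι] (i : ι) : LocallyLipschitz (fun v : ι → ℝ => v i) :=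
  (LipschitzWith.eval i).locallyLipschitz

lemma vfield_locLip {V : Type*} {ω : V → V → ℝ} (hlf : ∀ x, (Function.support (ω x)).Finite)
    {p : ℝ} (hp : 2 < p) {f : ℝ → ℝ} (hf : LocallyLipschitz f) (U : Set V) [Fintype U] :
    LocallyLipschitz (vfield ω p f U) := by
  have hfst : LocallyLipschitz (Prod.fst : (U → ℝ) × (U → ℝ) → (U → ℝ)) :=
    LipschitzWith.prod_fst.locallyLipschitz
  have hsnd : LocallyLipschitz (Prod.snd : (U → ℝ) × (U → ℝ) → (U → ℝ)) :=
    LipschitzWith.prod_snd.locallyLipschitz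
  have hext : ∀ y, LocallyLipschitz (fun q : (U → ℝ) × (U → ℝ) => extU U q.1 y) := by
    intro y
    unfold extU
    by_cases h : y ∈ U
    · simp only [h, dite_true]
      exact ((locLip_eval (⟨y, h⟩ : U)).comp hfst).max_const 0
    · simp only [h, dite_false]
      exact LocallyLipschitz.const 0
  refine locLip_pi fun x => ?_
  unfold vfield
  refine LocallyLipschitz.add ?_ ?_
  · simp only [pLap_eq_sum hlf]
    refine locLip_mul (LocallyLipschitz.const _) (locLip_sum _ fun y _ => ?_)
    refine locLip_mul (LocallyLipschitz.const _) ?_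
    exact (phi_locLip p hp).comp ((hext y).sub (hext x))
  · exact locLip_mul ((locLip_eval x).comp hsnd)
      (hf.comp (((locLip_eval x).comp hfst).max_const 0))

lemma ITv_sub (T : ℝ≥0∞) : ITv T ⊆ Ici 0 := fun _ ht => ht.1

lemma ITv_ext (T : ℝ≥0∞) : ∀ t ∈ ITv T, ∃ b, t < b ∧ Ico 0 b ⊆ ITv T := by
  rintro t ⟨h0, ht⟩
  obtain ⟨q, hq1, hq2⟩ := exists_between ht
  have hq : q ≠ ⊤ := hq2.ne_top
  refine ⟨q.toReal, ?_, ?_⟩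
  · exact (ENNReal.ofReal_lt_iff_lt_toReal h0 hq).1 hq1
  · rintro s ⟨hs0, hs⟩
    exact ⟨hs0, ((ENNReal.ofReal_lt_iff_lt_toReal hs0 hq).2 hs).trans hq2⟩

lemma ITv_uniqueDiff (T : ℝ≥0∞) : UniqueDiffOn ℝ (ITv T) := by
  intro t ht
  obtain ⟨b, hb, hsub⟩ := ITv_ext T t ht
  exact (uniqueDiffOn_Ico 0 b t ⟨ht.1, hb⟩).mono hsub

lemma ITv_nhds {T : ℝ≥0∞} {t : ℝ} (ht : t ∈ ITv T) (h0 : 0 < t) : ITv T ∈ nhds t := by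
  obtain ⟨b, hb, hsub⟩ := ITv_ext T t ht
  exact mem_of_superset (Ico_mem_nhds h0 hb) hsub

lemma ITv_nhdsGE {T : ℝ≥0∞} {t : ℝ} (ht : t ∈ ITv T) : ITv T ∈ nhdsWithin t (Ici t) := by
  obtain ⟨b, hb, hsub⟩ := ITv_ext T t ht
  exact mem_of_superset (Ico_mem_nhdsGE hb) fun s hs => hsub ⟨ht.1.trans hs.1, hs.2⟩

lemma ITv_mono {T : ℝ≥0∞} {s t : ℝ} (ht : t ∈ ITv T) (h0 : 0 ≤ s) (hst : s ≤ t) : s ∈ ITv T :=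
  ⟨h0, (ENNReal.ofReal_le_ofReal hst).trans_lt ht.2⟩

/-- For functions vanishing on the boundary and nonnegative on `U`, the `p`-Laplacian on `U` only
sees the restriction to `U`. -/
lemma pLap_extU {V : Type*} {ω : V → V → ℝ} (hsymm : ∀ x y, ω x y = ω y x)
    (hnonneg : ∀ x y, 0 ≤ ω x y) {p : ℝ} {U : Set V} {g : V → ℝ} (h0 : ∀ x ∈ U, 0 ≤ g x)
    (hb : ∀ x ∈ bdry ω U, g x = 0) (x : U) :
    pLap ω p g x = pLap ω p (extU U fun i => g i) x := by
  have hin : ∀ y ∈ U, g y = extU U (fun i => g i) y := by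
    intro y hy
    simp [extU, hy, h0 y hy]
  refine pLap_congr (hin _ x.2) fun y hy => ?_
  by_cases hyU : y ∈ U
  · exact hin y hyU
  · have : y ∈ bdry ω U := ⟨hyU, x, x.2, by
      rw [hsymm]; exact lt_of_le_of_ne (hnonneg _ _) (Ne.symm hy)⟩
    rw [hb y this]; simp [extU, hyU]

lemma sol_rhs {V : Type*} {ω : V → V → ℝ} (hsymm : ∀ x y, ω x y = ω y x)
    (hnonneg : ∀ x y, 0 ≤ ω x y) {p : ℝ} {U : Set V} {σ : V → ℝ → ℝ} {f : ℝ → ℝ}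
    {g : V → ℝ} (h0 : ∀ x ∈ U, 0 ≤ g x)
    (hb : ∀ x ∈ bdry ω U, g x = 0) {t : ℝ} (ht : 0 ≤ t) (x : U) :
    pLap ω p g x + σ x t * f (g x) =
      vfield ω p f U (fun i => g i, fun i => σ i (max t 0)) x := by
  unfold vfield
  rw [pLap_extU hsymm hnonneg h0 hb x]
  simp only [max_eq_left ht, max_eq_left (h0 x x.2)]

lemma sol_hasDeriv {V : Type*} {ω : V → V → ℝ} (hsymm : ∀ x y, ω x y = ω y x)
    (hnonneg : ∀ x y, 0 ≤ ω x y) (hlf : ∀ x, (Function.support (ω x)).Finite)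
    {p : ℝ} (hp : 2 < p) {U : Set V} [Fintype U] {σ : V → ℝ → ℝ}
    (hσ : Continuous fun t => fun i : U => σ i (max t 0)) {f : ℝ → ℝ}
    (hf : LocallyLipschitz f) {u0 : V → ℝ} {T : ℝ≥0∞} {u : V → ℝ → ℝ}
    (hsol : IsNonnegDirichletSol ω p σ f u0 U T u) (x : U) :
    ∀ t ∈ ITv T, HasDerivWithinAt (u x)
      (vfield ω p f U (fun i => u i t, fun i => σ i (max t 0)) x) (ITv T) t := by
  obtain ⟨hc, hnn, heq, hbd, -⟩ := hsol
  have hV := (vfield_locLip hlf hp hf U).continuous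
  refine deriv_extend (ITv_sub T) (ITv_ext T) 0 (hc x x.2).continuousOn ?_ ?_
  · have h1 : ContinuousOn (fun t => ((fun i : U => u i t, fun i : U => σ i (max t 0)) :
        (U → ℝ) × (U → ℝ))) (ITv T) :=
      (continuousOn_pi.2 fun i : U => (hc i i.2).continuousOn).prodMk hσ.continuousOn
    exact ((continuous_apply x).comp hV).comp_continuousOn h1
  · intro t ht h0 _
    have h1 := ((hc x x.2).differentiableOn (by simp) t ht).hasDerivWithinAt
    rw [heq x x.2 t ht h0, sol_rhs hsymm hnonneg (fun y hy => hnn y (Or.inl hy) t ht)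
      (fun y hy => hbd y hy t ht) h0.le x] at h1
    exact h1.hasDerivAt (ITv_nhds ht h0)

theorem dirichlet_solution_blows_up
    {V : Type*} (ω : V → V → ℝ)
    (hsymm : ∀ x y, ω x y = ω y x)
    (hnonneg : ∀ x y, 0 ≤ ω x y)
    (hloop : ∀ x, ω x x = 0)
    (hlf : ∀ x, (Function.support (ω x)).Finite)
    (hconn : ∀ x y, Relation.ReflTransGen (fun a b => 0 < ω a b) x y)
    (p : ℝ) (hp : 2 < p)
    (U : Set V) (hUfin : U.Finite) (hUne : U.Nonempty)
    (σ : V → ℝ → ℝ)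
    (hσpos : ∀ x t, 0 ≤ t → 0 < σ x t)
    (hσcont : ∀ x, ContinuousOn (σ x) (Set.Ici 0))
    (δ : ℝ) (hδpos : 0 < δ) (hσδ : ∀ x ∈ U, ∀ t, 0 ≤ t → δ ≤ σ x t)
    (f : ℝ → ℝ) (hf : LocallyLipschitz f) (hf0 : f 0 = 0)
    (ε : ℝ) (hε : 0 < ε)
    (hfgrow : ∀ s, 0 ≤ s → (1 / δ + ε) * s ^ (p - 1) ≤ f s)
    (u0 : V → ℝ) (hu0nn : ∀ x ∈ U, 0 ≤ u0 x) (hu0ne : ∃ x ∈ U, u0 x ≠ 0)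
    (T : ℝ≥0∞) (hT : 0 < T) (u : V → ℝ → ℝ)
    (hsol : IsNonnegDirichletSol ω p σ f u0 U T u)
    (hmax : ¬ ∃ T' : ℝ≥0∞, T < T' ∧ ∃ v : V → ℝ → ℝ,
      IsNonnegDirichletSol ω p σ f u0 U T' v ∧
      ∀ x ∈ vclosure ω U, ∀ t ∈ ITv T, v x t = u x t) :
    T < ⊤ ∧
      Filter.Tendsto (fun t => ⨆ x : U, u x.1 t)
        (nhdsWithin T.toReal (Set.Iio T.toReal)) Filter.atTop := by
  haveI : Fintype U := hUfin.fintype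
  haveI : Nonempty U := hUne.to_subtype
  have hσ : Continuous fun t : ℝ => fun i : U => σ i (max t 0) := by
    refine continuous_pi fun i => ?_
    exact (hσcont i).comp_continuous (by fun_prop) fun t => mem_Ici.2 (le_max_right _ _)
  have hder := sol_hasDeriv hsymm hnonneg hlf hp hσ hf hsol
  have hVL := vfield_locLip hlf hp hf U
  obtain ⟨hc, hnn, heq, hbd, hini⟩ := id hsol
  have hnnU : ∀ (x : U), ∀ t ∈ ITv T, 0 ≤ u x t := fun x => hnn x (Or.inl x.2)
  have h0I : (0 : ℝ) ∈ ITv T := ⟨le_rfl, by simpa using hT⟩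
  have hle : ∀ (i : U) t, u i t ≤ ⨆ x : U, u x.1 t :=
    fun i t => le_ciSup (finite_range (fun j : U => u j t)).bddAbove i
  have hm0 : 0 < ⨆ x : U, u x.1 0 := by
    obtain ⟨x, hx, hx0⟩ := hu0ne
    refine lt_of_lt_of_le ?_ (hle ⟨x, hx⟩ 0)
    simp only [hini x hx]
    exact lt_of_le_of_ne (hu0nn x hx) (Ne.symm hx0)
  have hc' : 0 < δ * ε := mul_pos hδpos hε
  have growth : ∀ a b, 0 ≤ a → b ∈ ITv T → (0 < ⨆ x : U, u x.1 a) → ∀ t ∈ Icc a b,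
      (⨆ x : U, u x.1 a) ≤ (⨆ x : U, u x.1 t) ∧ (⨆ x : U, u x.1 t) ^ (-(p - 2)) ≤
        (⨆ x : U, u x.1 a) ^ (-(p - 2)) - (p - 2) * (δ * ε) / 2 * (t - a) := by
    intro a b ha hb hpos
    have hI : ∀ t ∈ Icc a b, t ∈ ITv T := fun t ht => ITv_mono hb (ha.trans ht.1) ht.2
    refine max_growth (u := fun (x : U) t => u x t)
      (u' := fun x t => vfield ω p f U (fun i => u i t, fun i => σ i (max t 0)) x)
      hc' hp ?_ ?_ ?_ hpos
    · exact fun i => (hc i i.2).continuousOn.mono hI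
    · intro i t ht
      have htI := hI t ⟨ht.1, ht.2.le⟩
      exact (hder i t htI).mono_of_mem_nhdsWithin (ITv_nhdsGE htI)
    · intro i t ht hmx
      have htI := hI t ⟨ht.1, ht.2.le⟩
      have hi0 := hnnU i t htI
      unfold vfield
      have e1 : extU U (fun j : U => u j t) i = u i t := by
        rw [extU_coe, max_eq_left hi0]
      have h1 := pLap_at_max (x := (i : V)) hnonneg hlf hp
        (extU_nonneg U (fun j : U => u j t)) (fun y => by
          rw [e1]
          unfold extU
          split_ifs with hy
          · exact max_le (hmx ⟨y, hy⟩) hi0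
          · exact hi0)
      rw [e1] at h1
      simp only [max_eq_left hi0, max_eq_left htI.1]
      have hpw : 0 ≤ u i t ^ (p - 1) := Real.rpow_nonneg hi0 _
      have h2 := hfgrow (u i t) hi0
      have h3 : 0 ≤ (1 / δ + ε) * u i t ^ (p - 1) := by positivity
      have h4 : δ * ((1 / δ + ε) * u i t ^ (p - 1)) ≤ σ i t * f (u i t) :=
        mul_le_mul (hσδ i i.2 t htI.1) h2 h3 (hσpos i t htI.1).le
      have h5 : δ * ((1 / δ + ε) * u i t ^ (p - 1)) = u i t ^ (p - 1) + δ * ε * u i t ^ (p - 1) := by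
        field_simp
      linarith
  have hTtop : T < ⊤ := by
    rw [lt_top_iff_ne_top]
    rintro rfl
    set A := (⨆ x : U, u x.1 0) ^ (-(p - 2)) with hA
    have hApos : 0 < A := Real.rpow_pos_of_pos hm0 _
    have hk : 0 < (p - 2) * (δ * ε) / 2 := by
      have : 0 < p - 2 := by linarith
      positivity
    set k := (p - 2) * (δ * ε) / 2 with hkdef
    set b := (A + 1) / k with hb
    have hb0 : 0 ≤ b := by positivity
    have h := growth 0 b le_rfl ⟨hb0, by simp⟩ hm0 b ⟨hb0, le_rfl⟩
    have h2 : 0 < (⨆ x : U, u x.1 b) ^ (-(p - 2)) :=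
      Real.rpow_pos_of_pos (hm0.trans_le h.1) _
    have h3 : k * (b - 0) = A + 1 := by rw [hb]; field_simp; ring
    have h4 := h.2
    rw [h3] at h4
    linarith
  refine ⟨hTtop, ?_⟩
  set τ := T.toReal with hτ
  have hTτ : T = ENNReal.ofReal τ := (ENNReal.ofReal_toReal hTtop.ne).symm
  have hτ0 : 0 < τ := ENNReal.toReal_pos hT.ne' hTtop.ne
  have hIT : ITv T = Ico 0 τ := by rw [hTτ, ITv_eq_of]
  by_contra hnt
  rw [tendsto_atTop] at hnt
  push Not at hnt
  obtain ⟨M, hM⟩ := hnt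
  have hbdd : ∀ t ∈ Ico 0 τ, (⨆ x : U, u x.1 t) ≤ M := by
    intro t ht
    obtain ⟨r, hr, hr1, hr2⟩ := (hM.and_eventually (Ioo_mem_nhdsLT ht.2)).exists
    have hrI : r ∈ ITv T := by rw [hIT]; exact ⟨ht.1.trans hr1.le, hr2⟩
    have hpos : 0 < ⨆ x : U, u x.1 t :=
      hm0.trans_le (growth 0 r le_rfl hrI hm0 t ⟨ht.1, hr1.le⟩).1
    have := (growth t r ht.1 hrI hpos r ⟨hr1.le, le_rfl⟩).1
    linarith
  obtain ⟨η, hη, w, hwu, hwc, hwd⟩ := ode_continuation hVL hσ hτ0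
    (u := fun t => fun i : U => u i t) (M := M) (by
      intro t ht
      have hM0 : 0 ≤ M := hm0.le.trans (hbdd 0 ⟨le_rfl, hτ0⟩)
      rw [pi_norm_le_iff_of_nonneg hM0]
      intro i
      rw [Real.norm_of_nonneg (hnnU i t (hIT ▸ ht))]
      exact (hle i t).trans (hbdd t ht)) (by
      intro t ht
      rw [hasDerivWithinAt_pi]
      intro i
      have := hder i t (hIT ▸ ht)
      rwa [hIT] at this)
  have hwi : ∀ i : U, ContinuousOn (fun t => w t i) (Ico 0 (τ + η)) := fun i =>
    (continuous_apply i).comp_continuousOn hwc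
  -- nonnegativity of the continuation
  have hwnn : ∀ i : U, ∀ t ∈ Ico 0 (τ + η), 0 ≤ w t i := by
    intro i t ht
    rcases lt_or_ge t τ with h | h
    · rw [hwu t ⟨ht.1, h⟩]; exact hnnU i t (by rw [hIT]; exact ⟨ht.1, h⟩)
    have hsub : Icc τ t ⊆ Ico 0 (τ + η) := fun r hr =>
      ⟨hτ0.le.trans hr.1, hr.2.trans_lt ht.2⟩
    have hwτ : 0 ≤ w τ i := by
      have hcw : ContinuousWithinAt (fun r => w r i) (Ioo 0 τ) τ :=
        (hwi i τ ⟨hτ0.le, by linarith⟩).mono fun r hr => ⟨hr.1.le, by linarith [hr.2]⟩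
      haveI : (nhdsWithin τ (Ioo 0 τ)).NeBot := by
        rw [nhdsWithin_Ioo_eq_nhdsLT hτ0]; infer_instance
      refine ge_of_tendsto hcw ?_
      filter_upwards [self_mem_nhdsWithin] with r hr
      rw [hwu r ⟨hr.1.le, hr.2⟩]
      exact hnnU i r (by rw [hIT]; exact ⟨hr.1.le, hr.2⟩)
    refine nonneg_of_deriv (b := t)
      (G := fun r => vfield ω p f U (w r, fun i => σ i (max r 0)) i) ((hwi i).mono hsub) hwτ
      ?_ ?_ t ⟨h, le_rfl⟩
    · intro r hr
      exact (hasDerivAt_pi.1 (hwd r ⟨hτ0.trans hr.1, hr.2.trans ht.2⟩ hr.1.ne')) i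
    · intro r hr hneg
      unfold vfield
      simp only [max_eq_right hneg.le, hf0, mul_zero, add_zero]
      rw [pLap_eq_sum hlf]
      have e1 : extU U (w r) i = 0 := by rw [extU_coe, max_eq_right hneg.le]
      refine mul_nonneg (inv_nonneg.2 ?_) (Finset.sum_nonneg fun y _ => ?_)
      · rw [graphMu_eq_sum hlf]; exact Finset.sum_nonneg fun y _ => hnonneg _ y
      · rw [e1, sub_zero]
        have := extU_nonneg U (w r) y
        have := hnonneg i y
        positivity
  apply hmax
  refine ⟨ENNReal.ofReal (τ + η), ?_,
    fun x t => if h : x ∈ U then w t ⟨x, h⟩ else 0, ?_, ?_⟩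
  · rw [hTτ]; exact (ENNReal.ofReal_lt_ofReal_iff (by linarith)).2 (by linarith)
  · have hIT' := ITv_eq_of (τ + η)
    have hud := ITv_uniqueDiff (ENNReal.ofReal (τ + η))
    have hGc : ∀ i : U, ContinuousOn
        (fun t => vfield ω p f U (w t, fun i => σ i (max t 0)) i) (Ico 0 (τ + η)) := fun i =>
      ((continuous_apply i).comp hVL.continuous).comp_continuousOn
        (hwc.prodMk hσ.continuousOn)
    have hD : ∀ i : U, ∀ t ∈ ITv (ENNReal.ofReal (τ + η)), HasDerivWithinAt (fun t => w t i)
        (vfield ω p f U (w t, fun i => σ i (max t 0)) i) (ITv (ENNReal.ofReal (τ + η))) t := by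
      intro i
      refine deriv_extend (ITv_sub _) (ITv_ext _) τ (by rw [hIT']; exact hwi i)
        (by rw [hIT']; exact hGc i) ?_
      intro t ht h0 hne
      rw [hIT'] at ht
      exact (hasDerivAt_pi.1 (hwd t ⟨h0, ht.2⟩ hne)) i
    refine ⟨?_, ?_, ?_, ?_, ?_⟩
    · intro x hx
      simp only [hx, dite_true]
      rw [contDiffOn_one_iff_derivWithin hud]
      refine ⟨fun t ht => (hD ⟨x, hx⟩ t ht).differentiableWithinAt, ?_⟩
      have := hGc ⟨x, hx⟩
      rw [← hIT'] at this
      exact this.congr fun t ht => (hD ⟨x, hx⟩ t ht).derivWithin (hud t ht)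
    · intro x _ t ht
      rw [hIT'] at ht
      dsimp only
      split_ifs with h
      · exact hwnn ⟨x, h⟩ t ht
      · exact le_rfl
    · intro x hx t ht _
      have h1 := (hD ⟨x, hx⟩ t ht).derivWithin (hud t ht)
      have ht' := ht
      rw [hIT'] at ht'
      have h2 := sol_rhs (p := p) (σ := σ) (f := f)
        (g := fun y => if h : y ∈ U then w t ⟨y, h⟩ else 0) hsymm hnonneg
        (fun y hy => by simp only [hy, dite_true]; exact hwnn ⟨y, hy⟩ t ht')
        (fun y hy => by simp only [hy.1, dite_false]) ht.1 ⟨x, hx⟩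
      simp only [Subtype.coe_prop, dite_true, Subtype.coe_eta] at h2
      simp only [hx, dite_true] at h2 ⊢
      rw [h1, h2]
    · intro x hx t _
      simp only [hx.1, dite_false]
    · intro x hx
      simp only [hx, dite_true]
      rw [hwu 0 ⟨le_rfl, hτ0⟩]
      exact hini x hx
  · intro x hx t ht
    dsimp only
    split_ifs with h
    · rw [hwu t (hIT ▸ ht)]
    · rcases hx with hx | hx
      · exact absurd hx h
      · exact (hbd x hx t ht).symm
end

section
/- Let p>2 and let U⊆V be finite with the induced subgraph (U,E|_U) connected and ∂U nonempty. Let λ be the smallest Dirichlet eigenvalue of −Δ_p on U (i.e. the minimum of all λ'∈ℝ admitting a nonzero eigenfunction) and let φ be a corresponding eigenfunction. Then φ does not change sign in U: either φ(x)>0 for every x∈U or φ(x)<0 for every x∈U. -/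
open scoped ENNReal
open Classical Filter Set

/-- `φ` is an eigenfunction of `-Δ_p` on `U` with Dirichlet boundary conditions and
eigenvalue `lam`: `φ = 0` on `∂U`, `φ` not identically zero on `Ū`, and
`-Δ_p|_U φ(x) = lam |φ(x)|^{p-2} φ(x)` for `x ∈ U`. (For `x ∈ U` all neighbours of `x`
lie in `Ū`, so `Δ_p` coincides with `Δ_p|_U` there.) -/
def IsDirichletEigenpair {V : Type*} (ω : V → V → ℝ) (p : ℝ) (U : Set V)
    (lam : ℝ) (φ : V → ℝ) : Prop :=
  (∀ x ∈ bdry ω U, φ x = 0) ∧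
  (∃ x ∈ vclosure ω U, φ x ≠ 0) ∧
  (∀ x ∈ U, -(pLap ω p φ x) = lam * |φ x| ^ (p - 2) * φ x)

noncomputable def pEn {V : Type*} (ω : V → V → ℝ) (p : ℝ) (W : Finset V) (f : V → ℝ) : ℝ :=
  ∑ x ∈ W, ∑ y ∈ W, ω x y * |f y - f x| ^ p

noncomputable def pNm {V : Type*} (m : V → ℝ) (p : ℝ) (S : Finset V) (f : V → ℝ) : ℝ :=
  ∑ x ∈ S, m x * |f x| ^ p

noncomputable def pL {V : Type*} (ω : V → V → ℝ) (p : ℝ) (W : Finset V) (f : V → ℝ) (x : V) : ℝ :=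
  ∑ y ∈ W, ω x y * |f y - f x| ^ (p - 2) * (f y - f x)

lemma by_parts {V : Type*} (ω : V → V → ℝ) (hsymm : ∀ x y, ω x y = ω y x) (p : ℝ)
    (W S : Finset V) (hSW : S ⊆ W) (u h : V → ℝ) (hh : ∀ x, x ∉ S → h x = 0) :
    ∑ x ∈ W, ∑ y ∈ W, ω x y * |u y - u x| ^ (p - 2) * (u y - u x) * (h y - h x)
      = -2 * ∑ x ∈ S, h x * pL ω p W u x := by
  have e1 : ∑ x ∈ W, ∑ y ∈ W, ω x y * |u y - u x| ^ (p - 2) * (u y - u x) * h x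
      = ∑ x ∈ S, h x * pL ω p W u x := by
    rw [Finset.sum_subset hSW (f := fun x => h x * pL ω p W u x)
      (fun x _ hx => by simp [hh x hx])]
    refine Finset.sum_congr rfl fun x _ => ?_
    rw [pL, Finset.mul_sum]
    exact Finset.sum_congr rfl fun y _ => by ring
  have e2 : ∑ x ∈ W, ∑ y ∈ W, ω x y * |u y - u x| ^ (p - 2) * (u y - u x) * h y
      = - ∑ x ∈ S, h x * pL ω p W u x := by
    rw [← e1, Finset.sum_comm, ← Finset.sum_neg_distrib]
    refine Finset.sum_congr rfl fun x _ => ?_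
    rw [← Finset.sum_neg_distrib]
    refine Finset.sum_congr rfl fun y _ => ?_
    rw [hsymm y x, abs_sub_comm (u x) (u y)]
    ring
  simp only [mul_sub _ (h _) (h _), Finset.sum_sub_distrib]
  rw [e1, e2]; ring

lemma abs_rpow_split (p : ℝ) (hp : 2 < p) (t : ℝ) : |t| ^ (p - 2) * t * t = |t| ^ p := by
  rcases eq_or_ne t 0 with rfl | ht
  · rw [abs_zero, Real.zero_rpow (show p ≠ 0 by linarith)]; simp
  · have h0 : 0 < |t| := abs_pos.2 ht
    rw [mul_assoc, ← abs_mul_abs_self t, ← mul_assoc, ← Real.rpow_add_one h0.ne',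
      ← Real.rpow_add_one h0.ne']
    congr 1; ring

lemma energy_eq {V : Type*} (ω : V → V → ℝ) (hsymm : ∀ x y, ω x y = ω y x) (p : ℝ) (hp : 2 < p)
    (W S : Finset V) (hSW : S ⊆ W) (u : V → ℝ) (hu : ∀ x, x ∉ S → u x = 0) (m : V → ℝ) (l : ℝ)
    (he : ∀ x ∈ S, - pL ω p W u x = m x * (l * |u x| ^ (p - 2) * u x)) :
    pEn ω p W u = 2 * l * pNm m p S u := by
  have h := by_parts ω hsymm p W S hSW u u hu
  have e : pEn ω p W u = ∑ x ∈ W, ∑ y ∈ W,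
      ω x y * |u y - u x| ^ (p - 2) * (u y - u x) * (u y - u x) := by
    refine Finset.sum_congr rfl fun x _ => Finset.sum_congr rfl fun y _ => ?_
    rw [← abs_rpow_split p hp]; ring
  rw [e, h, pNm, Finset.mul_sum, Finset.mul_sum]
  refine Finset.sum_congr rfl fun x hx => ?_
  rw [← abs_rpow_split p hp]
  linear_combination 2 * u x * he x hx

lemma min_eigen {V : Type*} (ω : V → V → ℝ) (hsymm : ∀ x y, ω x y = ω y x) (p : ℝ) (hp : 2 < p)
    (W S : Finset V) (hSW : S ⊆ W) (u : V → ℝ) (hu : ∀ x, x ∉ S → u x = 0) (m : V → ℝ) (l : ℝ)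
    (hmin : ∀ f : V → ℝ, (∀ x, x ∉ S → f x = 0) → 2 * l * pNm m p S f ≤ pEn ω p W f)
    (hEq : pEn ω p W u = 2 * l * pNm m p S u) :
    ∀ x ∈ S, - pL ω p W u x = m x * (l * |u x| ^ (p - 2) * u x) := by
  intro a ha
  set h : V → ℝ := fun x => if x = a then 1 else 0 with hh
  have hhS : ∀ x, x ∉ S → h x = 0 := by
    intro x hx
    have : x ≠ a := by rintro rfl; exact hx ha
    simp [hh, this]
  have key : ∀ c d : ℝ, HasDerivAt (fun t : ℝ => |c + t * d| ^ p)
      (p * |c| ^ (p - 2) * c * d) 0 := by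
    intro c d
    have h1 : HasDerivAt (fun t : ℝ => c + t * d) d 0 := by
      simpa using ((hasDerivAt_id (0:ℝ)).mul_const d).const_add c
    have h2 := hasDerivAt_abs_rpow (c + 0 * d) (p := p) (by linarith)
    have h3 := HasDerivAt.comp (0:ℝ) h2 h1
    simpa [Function.comp_def] using h3
  have dE : HasDerivAt (fun t : ℝ => pEn ω p W (fun x => u x + t * h x))
      (∑ x ∈ W, ∑ y ∈ W, ω x y * (p * |u y - u x| ^ (p - 2) * (u y - u x) * (h y - h x))) 0 := by
    unfold pEn
    refine HasDerivAt.fun_sum fun x _ => HasDerivAt.fun_sum fun y _ => ?_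
    have := (key (u y - u x) (h y - h x)).const_mul (ω x y)
    have e : (fun t : ℝ => ω x y * |u y + t * h y - (u x + t * h x)| ^ p)
        = fun t : ℝ => ω x y * |u y - u x + t * (h y - h x)| ^ p := by
      funext t
      congr 3
      ring
    rw [e]; exact this
  have dN : HasDerivAt (fun t : ℝ => pNm m p S (fun x => u x + t * h x))
      (∑ x ∈ S, m x * (p * |u x| ^ (p - 2) * u x * h x)) 0 := by
    unfold pNm
    exact HasDerivAt.fun_sum fun x _ => (key (u x) (h x)).const_mul (m x)
  have dJ := dE.sub (dN.const_mul (2 * l))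
  have hloc : IsLocalMin ((fun t : ℝ => pEn ω p W (fun x => u x + t * h x)) -
      (fun t : ℝ => 2 * l * pNm m p S (fun x => u x + t * h x))) 0 := by
    refine Filter.Eventually.of_forall fun t => ?_
    have := hmin (fun x => u x + t * h x) (fun x hx => by simp [hu x hx, hhS x hx])
    simp only [Pi.sub_apply, zero_mul, add_zero]
    linarith
  have hz := hloc.hasDerivAt_eq_zero dJ
  have bp := by_parts ω hsymm p W S hSW u h hhS
  have e1 : ∑ x ∈ W, ∑ y ∈ W, ω x y * (p * |u y - u x| ^ (p - 2) * (u y - u x) * (h y - h x))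
      = p * ∑ x ∈ W, ∑ y ∈ W, ω x y * |u y - u x| ^ (p - 2) * (u y - u x) * (h y - h x) := by
    simp only [Finset.mul_sum]
    exact Finset.sum_congr rfl fun x _ => Finset.sum_congr rfl fun y _ => by ring
  have e2 : ∑ x ∈ S, h x * pL ω p W u x = pL ω p W u a := by
    simp [hh, ha]
  have e3 : ∑ x ∈ S, m x * (p * |u x| ^ (p - 2) * u x * h x)
      = m a * (p * |u a| ^ (p - 2) * u a) := by
    simp [hh, ha]
  rw [e1, bp, e2, e3] at hz
  have hp0 : p ≠ 0 := by linarith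
  have : p * (- pL ω p W u a) = p * (m a * (l * |u a| ^ (p - 2) * u a)) := by
    linear_combination hz / 2
  exact mul_left_cancel₀ hp0 this

lemma pEn_smul {V : Type*} (ω : V → V → ℝ) (p : ℝ) (W : Finset V) (c : ℝ) (f : V → ℝ) :
    pEn ω p W (fun x => c * f x) = |c| ^ p * pEn ω p W f := by
  simp only [pEn, Finset.mul_sum]
  refine Finset.sum_congr rfl fun x _ => Finset.sum_congr rfl fun y _ => ?_
  rw [← mul_sub, abs_mul, Real.mul_rpow (abs_nonneg _) (abs_nonneg _)]; ring

lemma pNm_smul {V : Type*} (m : V → ℝ) (p : ℝ) (W : Finset V) (c : ℝ) (f : V → ℝ) :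
    pNm m p W (fun x => c * f x) = |c| ^ p * pNm m p W f := by
  simp only [pNm, Finset.mul_sum]
  refine Finset.sum_congr rfl fun x _ => ?_
  rw [abs_mul, Real.mul_rpow (abs_nonneg _) (abs_nonneg _)]; ring

lemma pNm_pos {V : Type*} (m : V → ℝ) (p : ℝ) (S : Finset V) (hm : ∀ x ∈ S, 0 < m x)
    (f : V → ℝ) (hf : ∃ x ∈ S, f x ≠ 0) : 0 < pNm m p S f := by
  obtain ⟨x, hx, hfx⟩ := hf
  refine Finset.sum_pos' (fun y hy => mul_nonneg (hm y hy).le (by positivity)) ⟨x, hx, ?_⟩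
  exact mul_pos (hm x hx) (Real.rpow_pos_of_pos (abs_pos.2 hfx) _)

lemma exists_min {V : Type*} (ω : V → V → ℝ) (p : ℝ) (hp : 2 < p)
    (W S : Finset V) (hS : S.Nonempty) (m : V → ℝ) (hm : ∀ x ∈ S, 0 < m x) :
    ∃ l : ℝ, ∃ u : V → ℝ, (∀ x, x ∉ S → u x = 0) ∧ (∃ x ∈ S, u x ≠ 0) ∧
      (∀ f : V → ℝ, (∀ x, x ∉ S → f x = 0) → 2 * l * pNm m p S f ≤ pEn ω p W f) ∧
      pEn ω p W u = 2 * l * pNm m p S u := by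
  let ext : (S → ℝ) → V → ℝ := fun g x => if hx : x ∈ S then g ⟨x, hx⟩ else 0
  have hext0 : ∀ g x, x ∉ S → ext g x = 0 := fun g x hx => by simp [ext, hx]
  have hextc : ∀ x, Continuous fun g => ext g x := by
    intro x
    by_cases hx : x ∈ S
    · simp only [ext, hx, dite_true]; exact continuous_apply _
    · simp only [ext, hx, dite_false]; exact continuous_const
  have hp0 : 0 ≤ p := by linarith
  have cE : Continuous fun g => pEn ω p W (ext g) := by
    unfold pEn
    refine continuous_finsetSum _ fun x _ => continuous_finsetSum _ fun y _ => ?_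
    exact continuous_const.mul
      ((((hextc y).sub (hextc x)).abs).rpow_const fun _ => Or.inr hp0)
  have cN : Continuous fun g => pNm m p S (ext g) := by
    unfold pNm
    refine continuous_finsetSum _ fun x _ => ?_
    exact continuous_const.mul (((hextc x).abs).rpow_const fun _ => Or.inr hp0)
  have hne : ∀ g : S → ℝ, g ≠ 0 → ∃ x ∈ S, ext g x ≠ 0 := by
    intro g hg
    obtain ⟨⟨x, hx⟩, h⟩ := Function.ne_iff.1 hg
    exact ⟨x, hx, by simpa [ext, hx] using h⟩
  have hpos : ∀ g : S → ℝ, g ≠ 0 → 0 < pNm m p S (ext g) := fun g hg =>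
    pNm_pos m p S hm _ (hne g hg)
  have hsne : ∀ g ∈ Metric.sphere (0 : S → ℝ) 1, g ≠ 0 := by
    rintro g hg rfl
    simp at hg
  have : Nonempty S := hS.to_subtype
  have hne' : (Metric.sphere (0 : S → ℝ) 1).Nonempty := NormedSpace.sphere_nonempty.2 zero_le_one
  obtain ⟨g, hg, hmin⟩ := (isCompact_sphere (0 : S → ℝ) 1).exists_isMinOn hne'
    (f := fun g => pEn ω p W (ext g) / pNm m p S (ext g))
    (cE.continuousOn.div cN.continuousOn fun g hg => (hpos g (hsne g hg)).ne')
  have hNg := hpos g (hsne g hg)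
  refine ⟨pEn ω p W (ext g) / pNm m p S (ext g) / 2, ext g, hext0 g, hne g (hsne g hg), ?_, ?_⟩
  · intro f hf
    let k : S → ℝ := fun x => f x
    have hk : ext k = f := by
      funext x
      by_cases hx : x ∈ S
      · simp [ext, k, hx]
      · simp [ext, hx, hf x hx]
    by_cases hk0 : k = 0
    · have hf0 : f = fun x => 0 * (0:ℝ) := by
        rw [← hk, hk0]; funext x; simp [ext]
      have hpn : p ≠ 0 := by linarith
      rw [hf0]
      simp [pEn, pNm, Real.zero_rpow hpn]
    · have hn : ‖k‖ ≠ 0 := norm_ne_zero_iff.2 hk0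
      have hs : ‖k‖⁻¹ • k ∈ Metric.sphere (0 : S → ℝ) 1 := by
        simp [norm_smul, hn]
      have h1 := isMinOn_iff.1 hmin _ hs
      have h2 : ext (‖k‖⁻¹ • k) = fun x => ‖k‖⁻¹ * f x := by
        rw [← hk]; funext x
        by_cases hx : x ∈ S <;> simp [ext, hx]
      have hc : 0 < |‖k‖⁻¹| ^ p := Real.rpow_pos_of_pos (abs_pos.2 (inv_ne_zero hn)) _
      simp only [h2] at h1
      rw [pEn_smul, pNm_smul, mul_div_mul_left _ _ hc.ne'] at h1
      have h3 := hpos k hk0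
      rw [hk] at h3
      have h4 := (le_div_iff₀ h3).1 h1
      linarith
  · field_simp

/-- for finite `U` with connected induced subgraph and nonempty boundary, any
eigenfunction corresponding to the smallest Dirichlet eigenvalue of `-Δ_p` on `U` does not
change sign in `U`: it is either everywhere positive or everywhere negative on `U`. -/
theorem first_eigenfunction_fixed_sign
    {V : Type*} (ω : V → V → ℝ)
    (hsymm : ∀ x y, ω x y = ω y x)
    (hnonneg : ∀ x y, 0 ≤ ω x y)
    (hloop : ∀ x, ω x x = 0)
    (hlf : ∀ x, (Function.support (ω x)).Finite)
    (hconn : ∀ x y, Relation.ReflTransGen (fun a b => 0 < ω a b) x y)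
    (p : ℝ) (hp : 2 < p)
    (U : Set V) (hUfin : U.Finite)
    (hUconn : ∀ x ∈ U, ∀ y ∈ U,
      Relation.ReflTransGen (fun a b => a ∈ U ∧ b ∈ U ∧ 0 < ω a b) x y)
    (hbne : (bdry ω U).Nonempty)
    (lam : ℝ) (hlam : IsLeast {l : ℝ | ∃ ψ : V → ℝ, IsDirichletEigenpair ω p U l ψ} lam)
    (φ : V → ℝ) (hφ : IsDirichletEigenpair ω p U lam φ) :
    (∀ x ∈ U, 0 < φ x) ∨ (∀ x ∈ U, φ x < 0) := by
  obtain ⟨b, hbU, y0, hy0, hby0⟩ := hbne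
  have hsum : ∀ x, Summable (ω x) := fun x => summable_of_hasFiniteSupport (hlf x)
  -- positivity of the degree
  have hmu : ∀ x ∈ U, 0 < graphMu ω x := by
    intro x hx
    have hxb : x ≠ b := by rintro rfl; exact hbU hx
    rcases Relation.ReflTransGen.cases_head (hconn x b) with h | ⟨c, hc, _⟩
    · exact absurd h hxb
    · exact (hsum x).tsum_pos (hnonneg x) c hc
  let S : Finset V := hUfin.toFinset
  have hWfin : (U ∪ ⋃ x ∈ U, Function.support (ω x)).Finite :=
    hUfin.union (hUfin.biUnion fun x _ => hlf x)
  let W : Finset V := hWfin.toFinset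
  have hS : ∀ x, x ∈ S ↔ x ∈ U := fun x => by simp [S]
  have hSW : S ⊆ W := by
    intro x hx
    have := (hS x).1 hx
    simp [W, this]
  have hW : ∀ x ∈ U, ∀ y, y ∉ W → ω x y = 0 := by
    intro x hx y hy
    by_contra h
    apply hy
    simp only [W, Set.Finite.mem_toFinset]
    exact Or.inr (Set.mem_biUnion hx h)
  have hpL : ∀ f : V → ℝ, ∀ x ∈ U, pL ω p W f x = graphMu ω x * pLap ω p f x := by
    intro f x hx
    unfold pLap pL
    rw [mul_inv_cancel_left₀ (hmu x hx).ne', tsum_eq_sum]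
    intro y hy
    simp [hW x hx y hy]
  have heig : ∀ f : V → ℝ, ∀ l : ℝ, (∀ x ∈ S, - pL ω p W f x =
      graphMu ω x * (l * |f x| ^ (p - 2) * f x)) ↔
      ∀ x ∈ U, -(pLap ω p f x) = l * |f x| ^ (p - 2) * f x := by
    intro f l
    refine forall_congr' fun x => ?_
    rw [hS]
    refine forall_congr' fun hx => ?_
    rw [hpL f x hx, ← mul_neg]
    exact mul_right_inj' (hmu x hx).ne'
  obtain ⟨l, u, hu0, ⟨xu, hxu, hune⟩, hmin, hEu⟩ := exists_min ω p hp W S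
    ⟨y0, (hS y0).2 hy0⟩ (graphMu ω) (fun x hx => hmu x ((hS x).1 hx))
  have hue := (heig u l).1 (min_eigen ω hsymm p hp W S hSW u hu0 (graphMu ω) l hmin hEu)
  have hle : lam ≤ l := hlam.2 ⟨u, fun x hx => hu0 x (fun h => hx.1 ((hS x).1 h)),
    ⟨xu, Or.inl ((hS xu).1 hxu), hune⟩, hue⟩
  -- truncate `φ` to `U`
  obtain ⟨hφb, ⟨x1, hx1, hφ1⟩, hφe⟩ := hφ
  have hx1U : x1 ∈ U := by
    rcases hx1 with h | h
    · exact h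
    · exact absurd (hφb x1 h) hφ1
  let v : V → ℝ := fun x => if x ∈ U then φ x else 0
  have hvU : ∀ x ∈ U, v x = φ x := fun x hx => by simp [v, hx]
  have hv0 : ∀ x, x ∉ S → v x = 0 := fun x hx => by
    have : x ∉ U := fun h => hx ((hS x).2 h)
    simp [v, this]
  have hve : ∀ x ∈ U, -(pLap ω p v x) = lam * |v x| ^ (p - 2) * v x := by
    intro x hx
    rw [hvU x hx, ← hφe x hx]
    unfold pLap
    congr 2
    refine tsum_congr fun y => ?_
    rw [hvU x hx]
    by_cases hy : y ∈ U
    · rw [hvU y hy]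
    · rcases (hnonneg x y).eq_or_lt with h | h
      · simp [← h]
      · have hyb : y ∈ bdry ω U := ⟨hy, x, hx, by rw [hsymm]; exact h⟩
        have : v y = φ y := by rw [hφb y hyb]; simp [v, hy]
        rw [this]
  have hEv := energy_eq ω hsymm p hp W S hSW v hv0 (graphMu ω) lam ((heig v lam).2 hve)
  have hNv : 0 < pNm (graphMu ω) p S v := pNm_pos _ p S (fun x hx => hmu x ((hS x).1 hx)) v
    ⟨x1, (hS x1).2 hx1U, by rw [hvU x1 hx1U]; exact hφ1⟩
  have hll : l = lam := by
    refine le_antisymm ?_ hle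
    have := hmin v hv0
    rw [hEv] at this
    have := le_of_mul_le_mul_right this hNv
    linarith
  subst hll
  -- the absolute value is a minimizer
  have hw0 : ∀ x, x ∉ S → |v x| = 0 := fun x hx => by simp [hv0 x hx]
  have hNw : pNm (graphMu ω) p S (fun x => |v x|) = pNm (graphMu ω) p S v := by
    simp [pNm]
  have hterm : ∀ x y, ω x y * |(|v y| - |v x|)| ^ p ≤ ω x y * |v y - v x| ^ p := fun x y =>
    mul_le_mul_of_nonneg_left (Real.rpow_le_rpow (abs_nonneg _)
      (abs_abs_sub_abs_le_abs_sub _ _) (by linarith)) (hnonneg x y)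
  have hEle : pEn ω p W (fun x => |v x|) ≤ pEn ω p W v :=
    Finset.sum_le_sum fun x _ => Finset.sum_le_sum fun y _ => hterm x y
  have hEge := hmin (fun x => |v x|) hw0
  have hEw : pEn ω p W (fun x => |v x|) = 2 * l * pNm (graphMu ω) p S (fun x => |v x|) := by
    refine le_antisymm ?_ hEge
    rw [hNw, ← hEv]; exact hEle
  have hwe := min_eigen ω hsymm p hp W S hSW (fun x => |v x|) hw0 (graphMu ω) l hmin hEw
  have hprop : ∀ x ∈ U, v x = 0 → ∀ y, 0 < ω x y → v y = 0 := by
    intro x hx hvx y hxy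
    have h := hwe x ((hS x).2 hx)
    simp only [pL, hvx, abs_zero, sub_zero, mul_zero, abs_abs, neg_eq_zero] at h
    have hyW : y ∈ W := by
      by_contra hy
      exact hxy.ne' (hW x hx y hy)
    have h2 := (Finset.sum_eq_zero_iff_of_nonneg (fun z _ => mul_nonneg
      (mul_nonneg (hnonneg x z) (Real.rpow_nonneg (abs_nonneg _) _)) (abs_nonneg _))).1 h y hyW
    by_contra hvy
    have h3 : 0 < |v y| := abs_pos.2 hvy
    have := mul_pos (mul_pos hxy (Real.rpow_pos_of_pos h3 (p - 2))) h3
    exact this.ne' h2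
  have hnz : ∀ x ∈ U, v x ≠ 0 := by
    intro x hx hvx
    have : ∀ z, Relation.ReflTransGen (fun a b => a ∈ U ∧ b ∈ U ∧ 0 < ω a b) x z → v z = 0 := by
      intro z hz
      induction hz with
      | refl => exact hvx
      | tail _ hbc ih => exact hprop _ hbc.1 ih _ hbc.2.2
    exact hφ1 (by rw [← hvU x1 hx1U]; exact this x1 (hUconn x hx x1 hx1U))
  have hEE : pEn ω p W (fun x => |v x|) = pEn ω p W v := by rw [hEw, hNw, hEv]
  have hedge : ∀ x ∈ U, ∀ y ∈ U, 0 < ω x y → 0 < v x * v y := by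
    intro x hx y hy hxy
    have h1 := (Finset.sum_eq_sum_iff_of_le
      (fun x _ => Finset.sum_le_sum fun y _ => hterm x y)).1 hEE x (hSW ((hS x).2 hx))
    have h2 := (Finset.sum_eq_sum_iff_of_le (fun y _ => hterm x y)).1 h1 y (hSW ((hS y).2 hy))
    have h3 := mul_left_cancel₀ hxy.ne' h2
    have h4 := (Real.rpow_left_inj (abs_nonneg _) (abs_nonneg _) (by linarith)).1 h3
    have h5 := (sq_eq_sq_iff_abs_eq_abs _ _).2 h4
    have h6 : |v y| * |v x| = v y * v x := by
      have a1 := sq_abs (v y)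
      have a2 := sq_abs (v x)
      linarith [sub_sq (|v y|) (|v x|), sub_sq (v y) (v x)]
    rw [mul_comm, ← h6]
    exact mul_pos (abs_pos.2 (hnz y hy)) (abs_pos.2 (hnz x hx))
  have hall : ∀ z, Relation.ReflTransGen (fun a b => a ∈ U ∧ b ∈ U ∧ 0 < ω a b) x1 z →
      0 < v x1 * v z := by
    intro z hz
    induction hz with
    | refl => exact mul_self_pos.2 (hnz x1 hx1U)
    | tail _ hbc ih =>
      have := hedge _ hbc.1 _ hbc.2.1 hbc.2.2
      have h7 := mul_pos ih this
      have h8 := hnz _ hbc.1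
      have h9 := mul_self_pos.2 h8
      refine pos_of_mul_pos_left (b := _ * _) (lt_of_lt_of_eq h7 ?_) h9.le
      ring
  rcases lt_or_gt_of_ne (hnz x1 hx1U) with h | h
  · right
    intro x hx
    rw [← hvU x hx]
    have := hall x (hUconn x1 hx1U x hx)
    by_contra hc
    nlinarith [not_lt.1 hc]
  · left
    intro x hx
    rw [← hvU x hx]
    exact pos_of_mul_pos_right (hall x (hUconn x1 hx1U x hx)) h.le
end
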